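/- Let X = T[x..x') and Y = T[y..y') be fragments of T ∈ Σ* with |X| ≥ 1 and |Y| < 2|X|, and assume the set {k ≥ 0 : |X̄_k| > k} has a maximum ℓ. Let m = y + ⌊|Y|/2⌋ (a middle position of Y), and let m_ℓ be the unique position with |exp(T_ℓ[0..m_ℓ))| ≤ m < |exp(T_ℓ[0..m_ℓ+1))|. Let e ∈ [m_ℓ..|T_ℓ|) be the largest position such that e − m_ℓ + 1 ≤ |X̄_ℓ| + ℓ and |shrink_{ℓ+1}(T_ℓ[m_ℓ..e+1))| ≤ 2ℓ+3, and let b ∈ [0..m_ℓ] be the smallest position such that m_ℓ − b + 1 ≤ |X̄_ℓ| + ℓ and |shrink_{ℓ+1}(T_ℓ[b..m_ℓ+1))| ≤ 2ℓ+3. Let b' ∈ [b..e+1] be minimal with y ≤ |exp(T_ℓ[0..b'))| and e' ≤ e be maximal with |exp(T_ℓ[0..e'+1))| ≤ y' (the proxy text is Y'_ℓ = T_ℓ[b'..e'+1), empty if b' > e'). Then for every position i with y ≤ i, i + |X| ≤ y', and T[i..i+|X|) = X, the unique position i_ℓ with |exp(T_ℓ[0..i_ℓ))| = i + |exp(L_0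 ⋯ L_{ℓ−1})| carries an occurrence of X̄_ℓ contained in the proxy text: b' ≤ i_ℓ and i_ℓ + |X̄_ℓ| ≤ e' + 1. -/

import Mathlib

namespace IPM

/-- The universal alphabet `𝒜`: least fixed point of `𝒜 = Σ ∪ (𝒜 × 𝒜) ∪ (𝒜 × ℤ_{≥2})`. -/
inductive UA (α : Type) where
  | sym  : α → UA α
  | pair : UA α → UA α → UA α
  | pow  : UA α → {m : ℕ // 2 ≤ m} → UA α
  deriving DecidableEq

variable {α : Type} [DecidableEq α]

/-- Expansion of a single symbol of the universal alphabet. -/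
def expand : UA α → List α
  | .sym c => [c]
  | .pair b c => expand b ++ expand c
  | .pow b m => (List.replicate m.1 (expand b)).flatten

/-- Expansion of a string of symbols (homomorphic extension). -/
def expandStr (T : List (UA α)) : List α := (T.map expand).flatten

/-- Decomposition of a string into blocks: a block boundary is placed between
adjacent symbols `a` and `b` unless `glue a b` holds. -/
def chunks {γ : Type} (glue : γ → γ → Bool) : List γ → List (List γ)
  | [] => []
  | [a] => [[a]]
  | a :: b :: rest =>
    match chunks glue (b :: rest) with
    | [] => [[a]]
    | blk :: G => if glue a b then (a :: blk) :: G else [a] :: blk :: G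

/-- Collapse a block: a length-1 block stays, a power block `A^m` (m ≥ 2) becomes the
symbol `(A, m)`, and a length-2 block `BC` with `B ≠ C` becomes the symbol `(B, C)`. -/
def collapse : List (UA α) → List (UA α)
  | [] => []
  | [a] => [a]
  | a :: b :: rest =>
    if (b :: rest).all (fun x => decide (x = a)) then
      [.pow a ⟨rest.length + 2, by omega⟩]
    else [.pair a b]

/-- Shrinking with respect to a glue relation: decompose into blocks and collapse them. -/
def shrinkWith (glue : UA α → UA α → Bool) (T : List (UA α)) : List (UA α) :=
  ((chunks glue T).map collapse).flatten

/-- In the `rle_B`-decomposition, no boundary is placed between `a` and `b` iff `a = b ∈ B`. -/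
def rleGlue (B : Set (UA α)) [DecidablePred (· ∈ B)] : UA α → UA α → Bool :=
  fun a b => decide (a = b ∧ a ∈ B)

/-- In the `pc_{L,R}`-decomposition, no boundary is placed between `a` and `b`
iff `a ∈ L` and `b ∈ R`. -/
def pcGlue (L R : Set (UA α)) [DecidablePred (· ∈ L)] [DecidablePred (· ∈ R)] :
    UA α → UA α → Bool :=
  fun a b => decide (a ∈ L ∧ b ∈ R)

/-- Restricted run-length encoding `rle_B`. -/
def rleC (B : Set (UA α)) [DecidablePred (· ∈ B)] (T : List (UA α)) : List (UA α) :=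
  shrinkWith (rleGlue B) T

/-- Restricted pair compression `pc_{L,R}`. -/
def pcC (L R : Set (UA α)) [DecidablePred (· ∈ L)] [DecidablePred (· ∈ R)]
    (T : List (UA α)) : List (UA α) :=
  shrinkWith (pcGlue L R) T


section Recompression

variable (Bs Ls Rs : ℕ → Set (UA α))
variable [∀ k, DecidablePred (· ∈ Bs k)] [∀ k, DecidablePred (· ∈ Ls k)]
variable [∀ k, DecidablePred (· ∈ Rs k)]

/-- The glue relation of `shrink_k`: run-length encoding `rle_{ℬ_k}` for odd `k`,
pair compression `pc_{ℒ_k,ℛ_k}` for even `k`. -/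
def glueK (k : ℕ) : UA α → UA α → Bool :=
  if k % 2 = 1 then rleGlue (Bs k) else pcGlue (Ls k) (Rs k)

/-- `shrink_k`: `rle_{ℬ_k}` for odd `k`, `pc_{ℒ_k,ℛ_k}` for even `k`. -/
def shrinkK (k : ℕ) (T : List (UA α)) : List (UA α) :=
  shrinkWith (glueK Bs Ls Rs k) T

/-- The restricted recompression sequence: `T_0 = T`, `T_k = shrink_k(T_{k-1})`. -/
def Tseq (T : List α) : ℕ → List (UA α)
  | 0 => T.map .sym
  | k + 1 => shrinkK Bs Ls Rs (k + 1) (Tseq T k)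

/-- Whether a string consists of copies of a single symbol. -/
def isUniform : List (UA α) → Bool
  | [] => true
  | a :: rest => rest.all (fun x => decide (x = a))

/-- The leftmost block of the `glue`-decomposition of `T`, or `ε` if there are no
blocks or that block consists of two distinct symbols. -/
def leftBlock (glue : UA α → UA α → Bool) (T : List (UA α)) : List (UA α) :=
  match chunks glue T with
  | [] => []
  | blk :: _ => if isUniform blk then blk else []

/-- The rightmost block of the `glue`-decomposition of `T`, or `ε` if there is at most
one block or that block consists of two distinct symbols. -/
def rightBlock (glue : UA α → UA α → Bool) (T : List (UA α)) : List (UA α) :=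
  let G := chunks glue T
  if G.length ≤ 1 then []
  else
    let blk := G.getLastD []
    if isUniform blk then blk else []

/-- The popped-sequence strings `X̄_k`: `X̄_0 = X` and
`X̄_{k+1} = shrink_{k+1}(X̄'_k)` where `X̄_k = L_k ⬝ X̄'_k ⬝ R_k`. -/
def Xbar (X : List α) : ℕ → List (UA α)
  | 0 => X.map .sym
  | k + 1 =>
    let Xb := Xbar X k
    let L := leftBlock (glueK Bs Ls Rs (k + 1)) Xb
    let R := rightBlock (glueK Bs Ls Rs (k + 1)) Xb
    shrinkK Bs Ls Rs (k + 1) ((Xb.drop L.length).take (Xb.length - L.length - R.length))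

/-- The popped-sequence block `L_k`. -/
def Lblk (X : List α) (k : ℕ) : List (UA α) :=
  leftBlock (glueK Bs Ls Rs (k + 1)) (Xbar Bs Ls Rs X k)

/-- The popped-sequence block `R_k`. -/
def Rblk (X : List α) (k : ℕ) : List (UA α) :=
  rightBlock (glueK Bs Ls Rs (k + 1)) (Xbar Bs Ls Rs X k)

end Recompression

/-!
An occurrence of `X` at position `i` of `T` induces an occurrence of `X̄_k` in `T_k` whose expansion
lies inside the occurrence of `X`: popping removes exactly those outer blocks that might extend
beyond the occurrence. Each step pops at most one block on either side, so by induction at most `k`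
symbols of `T_k` on either side of `X̄_k` are needed to cover the whole occurrence of `X` again.

Let `a` be a position of `T_ℓ` whose expansion meets the occurrence of `X`. It is then at most `ℓ`
symbols away from `X̄_ℓ`, so the window from `a` to the far end of `X̄_ℓ`, in either direction,
has at most `|X̄_ℓ| + ℓ` symbols. By maximality of `ℓ`, `X̄_{ℓ+1}` has at most `ℓ + 1` symbols,
hence `X̄_ℓ` has at most `ℓ + 3` blocks and the window at most `2ℓ + 3`. The windows `T_ℓ[b..a]`
and `T_ℓ[a..e]`, being maximal, therefore reach both ends of `X̄_ℓ`.
-/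

section Blocks

variable {γ : Type*} {g : γ → γ → Bool} {U V W : List γ}

/-- A block boundary between `U` and `V` in the decomposition of `U ++ V`; if one of the two strings
is empty, there is nothing to separate and the condition holds vacuously. -/
def Boundary (g : γ → γ → Bool) (U V : List γ) : Prop :=
  ∀ a ∈ U.getLast?, ∀ b ∈ V.head?, g a b = false

namespace Boundary

theorem append_right (h : Boundary g U V) (hV : V ≠ []) (W : List γ) : Boundary g U (V ++ W) := by
  intro a ha b hb
  rw [List.head?_append_of_ne_nil _ hV] at hb
  exact h a ha b hb

theorem append_left (h : Boundary g U V) (hU : U ≠ []) (W : List γ) : Boundary g (W ++ U) V := by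
  intro a ha b hb
  rw [List.getLast?_append_of_ne_nil _ hU] at ha
  exact h a ha b hb

theorem of_isPrefix (h : Boundary g U V) (hW : W <+: V) : Boundary g U W := by
  obtain ⟨S, rfl⟩ := hW
  intro a ha b hb
  exact h a ha b (List.mem_head?_append_of_mem_head? hb)

theorem of_isSuffix (h : Boundary g U V) (hW : W <:+ U) : Boundary g W V := by
  obtain ⟨P, rfl⟩ := hW
  intro a ha b hb
  exact h a (List.mem_getLast?_append_of_mem_getLast? ha) b hb

end Boundary

theorem chunks_eq_splitBy {γ : Type} (g : γ → γ → Bool) (W : List γ) :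
    chunks g W = W.splitBy g := by
  induction W with
  | nil => rfl
  | cons a W ih =>
    match W with
    | [] => rfl
    | b :: W =>
      obtain ⟨C, G, hCG⟩ := List.exists_cons_of_ne_nil (List.splitBy_ne_nil (r := g).2
        (List.cons_ne_nil b W))
      rw [chunks, ih, hCG]
      dsimp only
      split_ifs with hab
      · obtain ⟨hflat, hne, hchain, hsep⟩ := List.splitBy_eq_iff.1 hCG
        obtain ⟨c, C, rfl⟩ := List.exists_cons_of_ne_nil (List.ne_of_not_mem_cons hne).symm
        obtain rfl : b = c := by simp_all
        refine (List.splitBy_eq_iff.2 ⟨by simp [hflat], by simp_all, ?_, ?_⟩).symm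
        · simp_all
        · rw [List.isChain_cons] at hsep ⊢
          simpa using hsep
      · have hbd : Boundary g [a] (b :: W) := by simpa [Boundary] using hab
        rw [← List.singleton_append (l := b :: W), List.splitBy_append hbd, hCG]
        rfl

theorem boundary_of_splitBy_eq_append {G₁ G₂ : List (List γ)} (h : W.splitBy g = G₁ ++ G₂) :
    Boundary g G₁.flatten G₂.flatten := by
  have hsep := List.isChain_getLast_head_splitBy g W
  rw [h, List.isChain_append] at hsep
  rcases List.eq_nil_or_concat G₁ with rfl | ⟨G₁, C, rfl⟩
  · simp [Boundary]
  rcases G₂ with - | ⟨D, G₂⟩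
  · simp [Boundary]
  obtain ⟨hC, hD, hCD⟩ := hsep.2.2 C (by simp) D (by simp)
  rw [List.concat_eq_append, List.flatten_concat, List.flatten_cons]
  refine Boundary.append_left (Boundary.append_right ?_ hD _) hC _
  simpa [Boundary, List.getLast?_eq_some_getLast hC, List.head?_eq_some_head hD] using hCD

theorem splitBy_flatten_of_splitBy_eq_append {G₁ G₂ : List (List γ)} (h : W.splitBy g = G₁ ++ G₂) :
    G₁.flatten.splitBy g = G₁ ∧ G₂.flatten.splitBy g = G₂ := by
  obtain ⟨-, hne, hchain, hsep⟩ := List.splitBy_eq_iff.1 h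
  rw [List.isChain_append] at hsep
  exact ⟨List.splitBy_eq_iff.2 ⟨rfl, fun hm ↦ hne (List.mem_append_left _ hm),
      fun C hC ↦ hchain C (List.mem_append_left _ hC), hsep.1⟩,
    List.splitBy_eq_iff.2 ⟨rfl, fun hm ↦ hne (List.mem_append_right _ hm),
      fun C hC ↦ hchain C (List.mem_append_right _ hC), hsep.2.1⟩⟩

theorem splitBy_append_of_glued {G₁ G₂ : List (List γ)} {C₁ C₂ : List γ}
    (hU : U.splitBy g = G₁ ++ [C₁]) (hV : V.splitBy g = C₂ :: G₂)
    (hglue : (C₁ ++ C₂).IsChain fun a b ↦ g a b) :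
    (U ++ V).splitBy g = G₁ ++ (C₁ ++ C₂) :: G₂ := by
  have hC₁ : C₁ ≠ [] := List.ne_nil_of_mem_splitBy (r := g) (l := U) (by simp [hU])
  have hC₂ : C₂ ≠ [] := List.ne_nil_of_mem_splitBy (r := g) (l := V) (by simp [hV])
  have hUV : U ++ V = G₁.flatten ++ ((C₁ ++ C₂) ++ G₂.flatten) := by
    rw [← List.flatten_splitBy g U, hU, ← List.flatten_splitBy g V, hV]
    simp
  rw [← List.singleton_append] at hV
  have hleft : Boundary g G₁.flatten ((C₁ ++ C₂) ++ G₂.flatten) := by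
    simpa using (boundary_of_splitBy_eq_append hU).append_right (by simpa) (C₂ ++ G₂.flatten)
  have hright : Boundary g (C₁ ++ C₂) G₂.flatten := by
    simpa using (boundary_of_splitBy_eq_append hV).append_left (by simpa) C₁
  rw [hUV, List.splitBy_append hleft, List.splitBy_append hright,
    List.splitBy_of_isChain (by simp [hC₁]) hglue, (splitBy_flatten_of_splitBy_eq_append hU).1,
    (splitBy_flatten_of_splitBy_eq_append hV).2, List.singleton_append]

theorem splitBy_append_cases (g : γ → γ → Bool) (U V : List γ) :
    (U ++ V).splitBy g = U.splitBy g ++ V.splitBy g ∨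
      ∃ G₁ C₁ C₂ G₂, U.splitBy g = G₁ ++ [C₁] ∧ V.splitBy g = C₂ :: G₂ ∧
        (U ++ V).splitBy g = G₁ ++ (C₁ ++ C₂) :: G₂ := by
  by_cases hbd : Boundary g U V
  · exact .inl (List.splitBy_append hbd)
  right
  simp only [Boundary, not_forall, Bool.not_eq_false] at hbd
  obtain ⟨a, ha, b, hb, hab⟩ := hbd
  have hUne : U ≠ [] := List.ne_nil_of_mem (List.mem_of_getLast? ha)
  have hVne : V ≠ [] := List.ne_nil_of_mem (List.mem_of_head? hb)
  obtain ⟨G₁, C₁, hU⟩ :=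
    (List.eq_nil_or_concat _).resolve_left (List.splitBy_ne_nil (r := g).2 hUne)
  obtain ⟨C₂, G₂, hV⟩ := List.exists_cons_of_ne_nil (List.splitBy_ne_nil (r := g).2 hVne)
  rw [List.concat_eq_append] at hU
  refine ⟨G₁, C₁, C₂, G₂, hU, hV, splitBy_append_of_glued hU hV ?_⟩
  have hC₁ : C₁ ∈ U.splitBy g := by simp [hU]
  have hC₂ : C₂ ∈ V.splitBy g := by simp [hV]
  rw [← List.flatten_splitBy g U, hU, List.flatten_concat,
    List.getLast?_append_of_ne_nil _ (List.ne_nil_of_mem_splitBy hC₁)] at ha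
  rw [← List.flatten_splitBy g V, hV, List.flatten_cons,
    List.head?_append_of_ne_nil _ (List.ne_nil_of_mem_splitBy hC₂)] at hb
  refine List.isChain_append.2
    ⟨List.isChain_of_mem_splitBy hC₁, List.isChain_of_mem_splitBy hC₂, fun c hc d hd ↦ ?_⟩
  rwa [Option.mem_unique hc ha, Option.mem_unique hd hb]

theorem length_splitBy_append_le (g : γ → γ → Bool) (U V : List γ) :
    ((U ++ V).splitBy g).length ≤ (U.splitBy g).length + (V.splitBy g).length := by
  obtain h | ⟨G₁, C₁, C₂, G₂, hU, hV, h⟩ := splitBy_append_cases g U V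
  · rw [h, List.length_append]
  · simp only [h, hU, hV, List.length_append, List.length_cons, List.length_nil]
    omega

theorem length_splitBy_le_of_isInfix (h : U <:+: V) :
    (U.splitBy g).length ≤ (V.splitBy g).length := by
  have hleft : ∀ P W : List γ, (W.splitBy g).length ≤ ((P ++ W).splitBy g).length := by
    intro P W
    obtain h | ⟨G₁, C₁, C₂, G₂, -, hW, h⟩ := splitBy_append_cases g P W <;> simp [*]
  have hright : ∀ W S : List γ, (W.splitBy g).length ≤ ((W ++ S).splitBy g).length := by
    intro W S
    obtain h | ⟨G₁, C₁, C₂, G₂, hW, -, h⟩ := splitBy_append_cases g W S <;> simp [*]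
  obtain ⟨P, S, rfl⟩ := h
  exact (hleft P U).trans (hright (P ++ U) S)

theorem length_splitBy_le_length (g : γ → γ → Bool) (W : List γ) :
    (W.splitBy g).length ≤ W.length := by
  induction W with
  | nil => simp
  | cons a W ih =>
    have hle := length_splitBy_append_le g [a] W
    rw [List.splitBy_of_isChain (by simp) (.singleton a), List.singleton_append,
      List.length_singleton] at hle
    rw [List.length_cons]
    omega

theorem length_splitBy_le_one_of_isChain (h : W.IsChain fun a b ↦ g a b) :
    (W.splitBy g).length ≤ 1 := by
  by_cases hW : W = []
  · simp [hW]
  · simp [List.splitBy_of_isChain hW h]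

theorem length_splitBy_drop_append_le {n k : ℕ} (h : U.length ≤ n + k) :
    (((U ++ V).drop n).splitBy g).length ≤ k + (V.splitBy g).length := by
  rw [List.drop_append]
  have hU : ((U.drop n).splitBy g).length ≤ k := by
    grw [length_splitBy_le_length, List.length_drop]
    omega
  grw [length_splitBy_append_le, hU,
    length_splitBy_le_of_isInfix (List.drop_suffix (n - U.length) V).isInfix]

theorem length_splitBy_take_append_le {n k : ℕ} (h : n ≤ U.length + k) :
    (((U ++ V).take n).splitBy g).length ≤ (U.splitBy g).length + k := by
  rw [List.take_append]
  have hV : ((V.take (n - U.length)).splitBy g).length ≤ k := by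
    grw [length_splitBy_le_length, List.length_take_le]
    omega
  grw [length_splitBy_append_le, hV,
    length_splitBy_le_of_isInfix (List.take_prefix n U).isInfix]

end Blocks

section Expansion

variable {β : Type} {U V : List (UA β)}

@[simp]
theorem expandStr_nil : expandStr ([] : List (UA β)) = [] := rfl

@[simp]
theorem expandStr_append (U V : List (UA β)) :
    expandStr (U ++ V) = expandStr U ++ expandStr V := by
  simp [expandStr]

theorem expandStr_map_sym (X : List β) : expandStr (X.map .sym) = X := by
  simp only [expandStr, List.map_map]
  exact List.flatMap_singleton' X

theorem length_expand_pos (A : UA β) : 0 < (expand A).length := by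
  induction A with
  | sym c => simp [expand]
  | pair B C hB hC => simp only [expand, List.length_append]; omega
  | pow B m hB =>
    have hm := m.2
    simp only [expand, List.length_flatten, List.map_replicate, List.sum_replicate, smul_eq_mul]
    positivity

theorem length_expandStr_le_of_isPrefix (h : U <+: V) :
    (expandStr U).length ≤ (expandStr V).length := by
  obtain ⟨W, rfl⟩ := h
  simp

theorem length_expandStr_take_monotone (W : List (UA β)) :
    Monotone fun p ↦ (expandStr (W.take p)).length :=
  fun _ _ h ↦ length_expandStr_le_of_isPrefix (List.take_prefix_take_left h)

theorem length_expandStr_take_strictMonoOn (W : List (UA β)) :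
    StrictMonoOn (fun p ↦ (expandStr (W.take p)).length) (Set.Iic W.length) := by
  intro p _ q hq hpq
  refine lt_of_lt_of_le ?_ (length_expandStr_take_monotone W (Nat.succ_le_of_lt hpq))
  have hp : p < W.length := hpq.trans_le hq
  have hpos := length_expand_pos W[p]
  simp only [Nat.succ_eq_add_one, ← List.take_append_getElem hp, expandStr_append,
    List.length_append]
  simpa [expandStr] using hpos

end Expansion

/-- A gluing rule all of whose blocks of length at least two are runs of one symbol, or all of whose
blocks have length at most two. Run-length encoding is of the first kind; pair compression is of
the second kind, since no symbol may both end one pair and begin another. -/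
def RunOrPair {γ : Type*} (g : γ → γ → Bool) : Prop :=
  (∀ a b, g a b = true → a = b) ∨ ∀ a b c, g a b = true → g b c = false

theorem runOrPair_glueK (Bs Ls Rs : ℕ → Set (UA α))
    [∀ k, DecidablePred (· ∈ Bs k)] [∀ k, DecidablePred (· ∈ Ls k)]
    [∀ k, DecidablePred (· ∈ Rs k)]
    (hdisj : ∀ k, k % 2 = 0 → Disjoint (Ls k) (Rs k)) (k : ℕ) :
    RunOrPair (glueK Bs Ls Rs k) := by
  unfold glueK
  split_ifs with hk
  · refine .inl fun a b h ↦ ?_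
    simp only [rleGlue, decide_eq_true_eq] at h
    exact h.1
  · refine .inr fun a b c h ↦ ?_
    simp only [pcGlue, decide_eq_true_eq] at h
    have hb : b ∉ Ls k := Set.disjoint_right.1 (hdisj k (by omega)) h.2
    simp [pcGlue, hb]

section Shrinking

variable {g : UA α → UA α → Bool} {C U V W : List (UA α)}

theorem isUniform_iff_isChain_eq : isUniform C = true ↔ C.IsChain (· = ·) := by
  cases C with
  | nil => simp [isUniform]
  | cons a C => simp [isUniform, List.isChain_cons_eq_iff_eq_replicate, List.eq_replicate_iff]

theorem eq_pair_of_not_isUniform (hg : RunOrPair g) (hC : C.IsChain fun a b ↦ g a b)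
    (hu : ¬isUniform C = true) :
    ∃ a b, C = [a, b] ∧ (∀ p, g p a = false) ∧ ∀ s, g b s = false := by
  have hg := hg.resolve_left fun heq ↦ hu (isUniform_iff_isChain_eq.2 (hC.imp heq))
  match C, hC, hu with
  | [], _, hu => exact absurd rfl hu
  | [a], _, hu => exact absurd rfl hu
  | [a, b], hC, _ =>
    have hab : g a b = true := by simpa using hC
    refine ⟨a, b, rfl, fun p ↦ Bool.eq_false_of_not_eq_true fun hpa ↦ ?_, fun s ↦ hg a b s hab⟩
    simp [hg p a b hpa] at hab
  | a :: b :: c :: C, hC, _ =>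
    obtain ⟨hab, hbc⟩ : g a b = true ∧ g b c = true := by simp_all
    simp [hg a b c hab] at hbc

theorem expandStr_collapse (hg : RunOrPair g) (hC : C.IsChain fun a b ↦ g a b) :
    expandStr (collapse C) = expandStr C := by
  by_cases hu : isUniform C = true
  · match C with
    | [] => rfl
    | [a] => rfl
    | a :: b :: C =>
      have hrep : b :: C = List.replicate (C.length + 1) a :=
        List.isChain_cons_eq_iff_eq_replicate.1 (isUniform_iff_isChain_eq.1 hu)
      rw [collapse, if_pos (by simpa [isUniform] using hu), hrep]
      simp [expandStr, expand, List.replicate_succ]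
  · obtain ⟨a, b, rfl, -⟩ := eq_pair_of_not_isUniform hg hC hu
    rw [collapse, if_neg (by simpa [isUniform] using hu)]
    simp [expandStr, expand]

theorem length_collapse (h : C ≠ []) : (collapse C).length = 1 := by
  match C with
  | [] => exact absurd rfl h
  | [a] => rfl
  | a :: b :: C => rw [collapse]; split_ifs <;> rfl

theorem length_flatten_map_collapse {G : List (List (UA α))} (h : ∀ C ∈ G, C ≠ []) :
    (G.map collapse).flatten.length = G.length := by
  induction G with
  | nil => rfl
  | cons C G ih =>
    rw [List.forall_mem_cons] at h
    rw [List.map_cons, List.flatten_cons, List.length_append, length_collapse h.1, ih h.2,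
      List.length_cons, add_comm]

theorem expandStr_flatten_map_collapse (hg : RunOrPair g) {G : List (List (UA α))}
    (h : ∀ C ∈ G, C.IsChain fun a b ↦ g a b) :
    expandStr (G.map collapse).flatten = expandStr G.flatten := by
  induction G with
  | nil => rfl
  | cons C G ih =>
    rw [List.forall_mem_cons] at h
    simp [expandStr_collapse hg h.1, ih h.2]

theorem shrinkWith_eq_flatten_map_collapse_splitBy (g : UA α → UA α → Bool) (W : List (UA α)) :
    shrinkWith g W = ((W.splitBy g).map collapse).flatten := by
  rw [shrinkWith, chunks_eq_splitBy]

theorem length_shrinkWith (g : UA α → UA α → Bool) (W : List (UA α)) :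
    (shrinkWith g W).length = (W.splitBy g).length := by
  rw [shrinkWith_eq_flatten_map_collapse_splitBy]
  exact length_flatten_map_collapse fun _ ↦ List.ne_nil_of_mem_splitBy

theorem expandStr_take_length_shrinkWith (hg : RunOrPair g) {G₁ G₂ : List (List (UA α))}
    (h : W.splitBy g = G₁ ++ G₂) :
    expandStr ((shrinkWith g W).take G₁.length) = expandStr G₁.flatten := by
  have hmem : ∀ C ∈ G₁, C ∈ W.splitBy g := fun C hC ↦ h ▸ List.mem_append_left _ hC
  rw [shrinkWith_eq_flatten_map_collapse_splitBy, h, List.map_append, List.flatten_append,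
    List.take_left' (length_flatten_map_collapse fun C hC ↦ List.ne_nil_of_mem_splitBy (hmem C hC)),
    expandStr_flatten_map_collapse hg fun C hC ↦ List.isChain_of_mem_splitBy (hmem C hC)]

theorem expandStr_shrinkWith (hg : RunOrPair g) (W : List (UA α)) :
    expandStr (shrinkWith g W) = expandStr W := by
  simpa [← length_shrinkWith] using
    expandStr_take_length_shrinkWith hg (W.splitBy g).append_nil.symm

theorem shrinkWith_append (h : Boundary g U V) :
    shrinkWith g (U ++ V) = shrinkWith g U ++ shrinkWith g V := by
  simp only [shrinkWith_eq_flatten_map_collapse_splitBy, List.splitBy_append h, List.map_append,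
    List.flatten_append]

theorem length_expandStr_rdrop_shrinkWith_append_le (hg : RunOrPair g) {n : ℕ}
    (hV : (V.splitBy g).length ≤ n) :
    (expandStr ((shrinkWith g (U ++ V)).rdrop n)).length ≤ (expandStr U).length := by
  suffices ∃ G₁ G₂, (U ++ V).splitBy g = G₁ ++ G₂ ∧ G₂.length ≤ n ∧ G₁.flatten <+: U by
    obtain ⟨G₁, G₂, h, hn, hpre⟩ := this
    refine le_trans ?_ (length_expandStr_le_of_isPrefix hpre)
    rw [← expandStr_take_length_shrinkWith hg h, List.rdrop, length_shrinkWith, h,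
      List.length_append]
    exact length_expandStr_take_monotone _ (by omega)
  obtain h | ⟨G₁, C₁, C₂, G₂, hUG, hVG, h⟩ := splitBy_append_cases g U V
  · exact ⟨_, _, h, hV, by simp⟩
  · refine ⟨_, _, h, by simpa [hVG] using hV, ?_⟩
    rw [← List.flatten_splitBy g U, hUG, List.flatten_concat]
    exact List.prefix_append ..

theorem length_expandStr_le_take_shrinkWith_append (hg : RunOrPair g) {n : ℕ}
    (hU : (U.splitBy g).length ≤ n) :
    (expandStr U).length ≤ (expandStr ((shrinkWith g (U ++ V)).take n)).length := by
  suffices ∃ G₁ G₂, (U ++ V).splitBy g = G₁ ++ G₂ ∧ G₁.length ≤ n ∧ U <+: G₁.flatten by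
    obtain ⟨G₁, G₂, h, hn, hpre⟩ := this
    refine (length_expandStr_le_of_isPrefix hpre).trans ?_
    rw [← expandStr_take_length_shrinkWith hg h]
    exact length_expandStr_take_monotone _ hn
  obtain h | ⟨G₁, C₁, C₂, G₂, hUG, -, h⟩ := splitBy_append_cases g U V
  · exact ⟨_, _, h, hU, by simp⟩
  · refine ⟨G₁ ++ [C₁ ++ C₂], G₂, by simp [h], by simpa [hUG] using hU, ?_⟩
    rw [← List.flatten_splitBy g U, hUG, List.flatten_concat, List.flatten_concat,
      ← List.append_assoc]
    exact List.prefix_append ..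

end Shrinking

section Popping

variable {g : UA α → UA α → Bool} {C L M R W : List (UA α)}

/-- The part of an outermost block that popping removes: everything, unless the block is a pair of
distinct symbols. -/
def poppedPart (C : List (UA α)) : List (UA α) := if isUniform C then C else []

/-- The part of an outermost block that popping keeps. -/
def keptPart (C : List (UA α)) : List (UA α) := if isUniform C then [] else C

/-- What popping leaves of `W`: the string `X̄'` obtained from `W = X̄`. -/
def core (g : UA α → UA α → Bool) (W : List (UA α)) : List (UA α) :=
  (W.drop (leftBlock g W).length).take
    (W.length - (leftBlock g W).length - (rightBlock g W).length)

theorem poppedPart_append_keptPart (C : List (UA α)) : poppedPart C ++ keptPart C = C := by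
  unfold poppedPart keptPart
  split_ifs <;> simp

theorem keptPart_append_poppedPart (C : List (UA α)) : keptPart C ++ poppedPart C = C := by
  unfold poppedPart keptPart
  split_ifs <;> simp

theorem isChain_poppedPart (h : C.IsChain fun a b ↦ g a b) :
    (poppedPart C).IsChain fun a b ↦ g a b := by
  unfold poppedPart
  split_ifs <;> simp [h]

theorem core_eq_of_eq_append (hL : leftBlock g W = L) (hR : rightBlock g W = R)
    (hW : W = L ++ M ++ R) : core g W = M := by
  rw [core, hL, hR, hW, List.append_assoc, List.drop_left' rfl]
  exact List.take_left' (by simp)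

theorem leftBlock_of_splitBy_eq_cons {G : List (List (UA α))} (h : W.splitBy g = C :: G) :
    leftBlock g W = poppedPart C := by
  rw [leftBlock, chunks_eq_splitBy, h, poppedPart]

theorem rightBlock_of_splitBy_eq_concat {G : List (List (UA α))} (hG : G ≠ [])
    (h : W.splitBy g = G ++ [C]) : rightBlock g W = poppedPart C := by
  simp [rightBlock, chunks_eq_splitBy, h, poppedPart, hG]

theorem popping_cases (g : UA α → UA α → Bool) (W : List (UA α)) :
    (W.IsChain (fun a b ↦ g a b) ∧
      leftBlock g W = poppedPart W ∧ core g W = keptPart W ∧ rightBlock g W = []) ∨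
    ∃ B N D, W = B ++ N ++ D ∧ B.IsChain (fun a b ↦ g a b) ∧ D.IsChain (fun a b ↦ g a b) ∧
      B ≠ [] ∧ D ≠ [] ∧ Boundary g B (N ++ D) ∧ Boundary g (B ++ N) D ∧
      leftBlock g W = poppedPart B ∧ core g W = keptPart B ++ N ++ keptPart D ∧
      rightBlock g W = poppedPart D := by
  rcases hG : W.splitBy g with - | ⟨B, G⟩
  · obtain rfl : W = [] := List.splitBy_eq_nil.1 hG
    exact .inl ⟨by simp, rfl, rfl, rfl⟩
  have hflat : B ++ G.flatten = W := by rw [← List.flatten_splitBy g W, hG, List.flatten_cons]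
  have hB : B ∈ W.splitBy g := by simp [hG]
  have hL : leftBlock g W = poppedPart B := leftBlock_of_splitBy_eq_cons hG
  rcases List.eq_nil_or_concat G with rfl | ⟨G, D, rfl⟩
  · obtain rfl : B = W := by simpa using hflat
    have hR : rightBlock g B = [] := by simp [rightBlock, chunks_eq_splitBy, hG]
    exact .inl ⟨List.isChain_of_mem_splitBy hB, hL,
      core_eq_of_eq_append hL hR (by simp [poppedPart_append_keptPart]), hR⟩
  rw [List.concat_eq_append] at hG
  have hD : D ∈ W.splitBy g := by simp [hG]
  have hW : W = B ++ G.flatten ++ D := by simpa using hflat.symm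
  have hR : rightBlock g W = poppedPart D :=
    rightBlock_of_splitBy_eq_concat (List.cons_ne_nil B G) hG
  have hBbd : Boundary g B (G.flatten ++ D) := by
    simpa using boundary_of_splitBy_eq_append (G₁ := [B]) hG
  have hDbd : Boundary g (B ++ G.flatten) D := by
    simpa using boundary_of_splitBy_eq_append (G₁ := B :: G) hG
  refine .inr ⟨B, G.flatten, D, hW, List.isChain_of_mem_splitBy hB, List.isChain_of_mem_splitBy hD,
    List.ne_nil_of_mem_splitBy hB, List.ne_nil_of_mem_splitBy hD, hBbd, hDbd, hL,
    core_eq_of_eq_append hL hR ?_, hR⟩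
  simp only [← List.append_assoc, poppedPart_append_keptPart]
  rw [List.append_assoc, keptPart_append_poppedPart, hW]

theorem leftBlock_append_core_append_rightBlock (g : UA α → UA α → Bool) (W : List (UA α)) :
    leftBlock g W ++ core g W ++ rightBlock g W = W := by
  obtain ⟨-, hL, hM, hR⟩ | ⟨B, N, D, hW, -, -, -, -, -, -, hL, hM, hR⟩ := popping_cases g W
  · rw [hL, hM, hR, poppedPart_append_keptPart, List.append_nil]
  · simp only [hL, hM, hR, ← List.append_assoc, poppedPart_append_keptPart]
    rw [List.append_assoc, keptPart_append_poppedPart, hW]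

theorem length_splitBy_leftBlock_le_one (g : UA α → UA α → Bool) (W : List (UA α)) :
    ((leftBlock g W).splitBy g).length ≤ 1 := by
  apply length_splitBy_le_one_of_isChain
  obtain ⟨hW, hL, -⟩ | ⟨B, N, D, -, hB, -, -, -, -, -, hL, -⟩ := popping_cases g W
  · exact hL ▸ isChain_poppedPart hW
  · exact hL ▸ isChain_poppedPart hB

theorem length_splitBy_rightBlock_le_one (g : UA α → UA α → Bool) (W : List (UA α)) :
    ((rightBlock g W).splitBy g).length ≤ 1 := by
  apply length_splitBy_le_one_of_isChain
  obtain ⟨-, -, -, hR⟩ | ⟨B, N, D, -, -, hD, -, -, -, -, -, -, hR⟩ := popping_cases g W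
  · simp [hR]
  · exact hR ▸ isChain_poppedPart hD

theorem boundary_append_leftBlock_core (hg : RunOrPair g) (P W : List (UA α)) :
    Boundary g (P ++ leftBlock g W) (core g W) := by
  obtain ⟨hW, hL, hM, -⟩ | ⟨B, N, D, -, hB, -, hBne, -, hbd, -, hL, hM, -⟩ := popping_cases g W
  · rw [hM, keptPart]
    split_ifs with hu
    · simp [Boundary]
    · obtain ⟨a, b, rfl, ha, -⟩ := eq_pair_of_not_isUniform hg hW hu
      simp [Boundary, ha]
  · rw [hL, hM, poppedPart, keptPart]
    split_ifs with hu
    · refine (hbd.append_left hBne P).of_isPrefix ⟨poppedPart D, ?_⟩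
      rw [List.nil_append, List.append_assoc, keptPart_append_poppedPart]
    · obtain ⟨a, b, rfl, ha, -⟩ := eq_pair_of_not_isUniform hg hB hu
      simp [Boundary, ha]

theorem boundary_core_rightBlock_append (hg : RunOrPair g) (W S : List (UA α)) :
    Boundary g (core g W) (rightBlock g W ++ S) := by
  obtain ⟨hW, -, hM, -⟩ | ⟨B, N, D, -, -, hD, -, hDne, -, hbd, -, hM, hR⟩ := popping_cases g W
  · rw [hM, keptPart]
    split_ifs with hu
    · simp [Boundary]
    · obtain ⟨a, b, rfl, -, hb⟩ := eq_pair_of_not_isUniform hg hW hu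
      simp [Boundary, hb]
  · rw [hM, hR, poppedPart, keptPart.eq_def D]
    split_ifs with hu
    · refine (hbd.append_right hDne S).of_isSuffix ⟨poppedPart B, ?_⟩
      rw [List.append_nil, ← List.append_assoc, poppedPart_append_keptPart]
    · obtain ⟨a, b, rfl, -, hb⟩ := eq_pair_of_not_isUniform hg hD hu
      simp [Boundary, hb]

end Popping

section NearlyCovers

/-- The string `Z`, placed in `P ++ Z ++ S`, expands to a fragment contained in `[i, j)`, and
extending `Z` by up to `k` symbols on either side makes the expansion cover `[i, j)`. -/
structure NearlyCovers {β : Type} (P Z S : List (UA β)) (k i j : ℕ) : Prop where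
  rdrop_le : (expandStr (P.rdrop k)).length ≤ i
  le_start : i ≤ (expandStr P).length
  stop_le : (expandStr (P ++ Z)).length ≤ j
  le_take : j ≤ (expandStr (P ++ Z ++ S.take k)).length

namespace NearlyCovers

variable {β : Type} {P Z S : List (UA β)} {a k i j : ℕ}

theorem length_left_le_add (h : NearlyCovers P Z S k i j)
    (ha : i < (expandStr ((P ++ Z ++ S).take (a + 1))).length) : P.length ≤ a + k := by
  by_contra! hak
  have htake : P.rdrop k = (P ++ Z ++ S).take (P.length - k) := by
    rw [List.rdrop, List.append_assoc, List.take_append_of_le_length (Nat.sub_le _ _)]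
  have hmono := length_expandStr_take_monotone (P ++ Z ++ S)
    (show a + 1 ≤ P.length - k by omega)
  have hle := h.rdrop_le
  rw [htake] at hle
  exact (ha.trans_le (hmono.trans hle)).false

theorem lt_length_append_add (h : NearlyCovers P Z S k i j)
    (ha : (expandStr ((P ++ Z ++ S).take a)).length < j) : a < (P ++ Z).length + k := by
  by_contra! hak
  have htake : P ++ Z ++ S.take k = (P ++ Z ++ S).take ((P ++ Z).length + k) := by
    rw [List.take_length_add_append]
  have hmono := length_expandStr_take_monotone (P ++ Z ++ S) hak
  have hle := h.le_take
  rw [htake] at hle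
  exact (hle.trans_lt (hmono.trans_lt ha)).false

theorem map_sym (U X V : List β) :
    NearlyCovers (U.map .sym) (X.map .sym) (V.map .sym) 0 U.length (U.length + X.length) := by
  constructor <;> simp only [List.rdrop, Nat.sub_zero, List.take_length, List.take_zero,
    List.append_nil, expandStr_append, expandStr_map_sym, List.length_append, le_refl]

end NearlyCovers

variable {g : UA α → UA α → Bool} {P L M R S : List (UA α)} {k i j : ℕ}

-- At most `k` symbols on each side separate `Z` from the ends of `[i, j)`; together with the popped
-- block on that side they form at most `k + 1` blocks, hence shrink to at most `k + 1` symbols.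
theorem NearlyCovers.shrink (hg : RunOrPair g) (h : NearlyCovers P (L ++ M ++ R) S k i j)
    (hL : (L.splitBy g).length ≤ 1) (hR : (R.splitBy g).length ≤ 1) :
    NearlyCovers (shrinkWith g (P ++ L)) (shrinkWith g M) (shrinkWith g (R ++ S)) (k + 1) i j where
  rdrop_le := by
    have hsplit : P ++ L = P.rdrop k ++ (P.drop (P.length - k) ++ L) := by
      rw [List.rdrop, ← List.append_assoc, List.take_append_drop]
    rw [hsplit]
    refine (length_expandStr_rdrop_shrinkWith_append_le hg ?_).trans h.rdrop_le
    grw [length_splitBy_append_le, hL, length_splitBy_le_length, List.length_drop]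
    omega
  le_start := by
    rw [expandStr_shrinkWith hg, expandStr_append, List.length_append]
    exact h.le_start.trans (Nat.le_add_right _ _)
  stop_le := by
    rw [expandStr_append, expandStr_shrinkWith hg, expandStr_shrinkWith hg, ← expandStr_append]
    refine (length_expandStr_le_of_isPrefix ⟨R, ?_⟩).trans h.stop_le
    simp only [List.append_assoc]
  le_take := by
    have hblocks : ((R ++ S.take k).splitBy g).length ≤ k + 1 := by
      grw [length_splitBy_append_le, hR, length_splitBy_le_length, List.length_take_le]
      omega
    have hright := length_expandStr_le_take_shrinkWith_append (V := S.drop k) hg hblocks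
    rw [List.append_assoc, List.take_append_drop] at hright
    refine h.le_take.trans ?_
    simp only [expandStr_append, expandStr_shrinkWith hg, List.length_append] at hright ⊢
    omega

end NearlyCovers

theorem exists_eq_append_append_of_take_drop {γ : Type*} {T X : List γ} {i : ℕ} (hX : X ≠ [])
    (h : (T.drop i).take X.length = X) : ∃ U V, T = U ++ X ++ V ∧ U.length = i := by
  refine ⟨T.take i, (T.drop i).drop X.length, ?_, ?_⟩
  · conv_lhs =>
      rw [← List.take_append_drop i T, ← List.take_append_drop X.length (T.drop i), h]
    rw [List.append_assoc]
  · rw [List.length_take, min_eq_left_iff]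
    by_contra! hi
    exact hX (by simpa [List.drop_eq_nil_of_le hi.le] using h.symm)

section Occurrences

variable {Bs Ls Rs : ℕ → Set (UA α)}
variable [∀ k, DecidablePred (· ∈ Bs k)] [∀ k, DecidablePred (· ∈ Ls k)]
variable [∀ k, DecidablePred (· ∈ Rs k)]

theorem Xbar_succ (X : List α) (k : ℕ) :
    Xbar Bs Ls Rs X (k + 1) = shrinkWith (glueK Bs Ls Rs (k + 1))
      (core (glueK Bs Ls Rs (k + 1)) (Xbar Bs Ls Rs X k)) :=
  rfl

theorem length_splitBy_Xbar_le (X : List α) (k : ℕ) :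
    ((Xbar Bs Ls Rs X k).splitBy (glueK Bs Ls Rs (k + 1))).length ≤
      (Xbar Bs Ls Rs X (k + 1)).length + 2 := by
  rw [Xbar_succ, length_shrinkWith]
  set g := glueK Bs Ls Rs (k + 1)
  conv_lhs => rw [← leftBlock_append_core_append_rightBlock g (Xbar Bs Ls Rs X k)]
  grw [length_splitBy_append_le, length_splitBy_append_le, length_splitBy_leftBlock_le_one,
    length_splitBy_rightBlock_le_one]
  omega

theorem core_Xbar_ne_nil {X : List α} {k : ℕ} (hne : Xbar Bs Ls Rs X (k + 1) ≠ []) :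
    core (glueK Bs Ls Rs (k + 1)) (Xbar Bs Ls Rs X k) ≠ [] := by
  intro hcore
  rw [Xbar_succ, hcore] at hne
  exact hne rfl

theorem Xbar_ne_nil_of_succ {X : List α} {k : ℕ} (hne : Xbar Bs Ls Rs X (k + 1) ≠ []) :
    Xbar Bs Ls Rs X k ≠ [] := by
  intro hnil
  have hcore := core_Xbar_ne_nil hne
  rw [hnil] at hcore
  exact hcore rfl

theorem Tseq_succ_eq_of_eq_append
    (hdisj : ∀ k, k % 2 = 0 → Disjoint (Ls k) (Rs k)) {T X : List α} {k : ℕ} {P S : List (UA α)}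
    (hT : Tseq Bs Ls Rs T k = P ++ Xbar Bs Ls Rs X k ++ S)
    (hne : Xbar Bs Ls Rs X (k + 1) ≠ []) :
    Tseq Bs Ls Rs T (k + 1) = shrinkWith (glueK Bs Ls Rs (k + 1)) (P ++ Lblk Bs Ls Rs X k) ++
      Xbar Bs Ls Rs X (k + 1) ++
      shrinkWith (glueK Bs Ls Rs (k + 1)) (Rblk Bs Ls Rs X k ++ S) := by
  set W := Xbar Bs Ls Rs X k
  set g := glueK Bs Ls Rs (k + 1)
  have hg : RunOrPair g := runOrPair_glueK Bs Ls Rs hdisj (k + 1)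
  have hsplit : P ++ W ++ S = P ++ leftBlock g W ++ (core g W ++ (rightBlock g W ++ S)) := by
    nth_rewrite 1 [← leftBlock_append_core_append_rightBlock g W]
    simp only [List.append_assoc]
  have hleft : Boundary g (P ++ leftBlock g W) (core g W ++ (rightBlock g W ++ S)) :=
    (boundary_append_leftBlock_core hg P W).append_right (core_Xbar_ne_nil hne) _
  rw [Tseq, hT, hsplit, shrinkK, shrinkWith_append hleft,
    shrinkWith_append (boundary_core_rightBlock_append hg W S), List.append_assoc]
  rfl

theorem exists_Tseq_eq_append_Xbar_append
    (hdisj : ∀ k, k % 2 = 0 → Disjoint (Ls k) (Rs k)) {T X : List α} {i : ℕ}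
    (hocc : (T.drop i).take X.length = X) {k : ℕ} (hne : Xbar Bs Ls Rs X k ≠ []) :
    ∃ P S, Tseq Bs Ls Rs T k = P ++ Xbar Bs Ls Rs X k ++ S ∧
      (expandStr P).length
        = i + (expandStr ((List.range k).map (Lblk Bs Ls Rs X)).flatten).length ∧
      NearlyCovers P (Xbar Bs Ls Rs X k) S k i (i + X.length) := by
  induction k with
  | zero =>
    have hX : X ≠ [] := fun h ↦ hne (by simp [Xbar, h])
    obtain ⟨U, V, hT, rfl⟩ := exists_eq_append_append_of_take_drop hX hocc
    refine ⟨U.map .sym, V.map .sym, ?_, ?_, .map_sym U X V⟩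
    · simp only [Tseq, Xbar, hT, List.map_append]
    · simp [expandStr_map_sym]
  | succ k ih =>
    have hg : RunOrPair (glueK Bs Ls Rs (k + 1)) := runOrPair_glueK Bs Ls Rs hdisj (k + 1)
    obtain ⟨P, S, hT, hP, hcov⟩ := ih (Xbar_ne_nil_of_succ hne)
    refine ⟨_, _, Tseq_succ_eq_of_eq_append hdisj hT hne, ?_, ?_⟩
    · simp [expandStr_shrinkWith hg, List.range_succ, hP, add_assoc]
    · rw [← leftBlock_append_core_append_rightBlock (glueK Bs Ls Rs (k + 1))
        (Xbar Bs Ls Rs X k)] at hcov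
      exact hcov.shrink hg (length_splitBy_leftBlock_le_one _ _)
        (length_splitBy_rightBlock_le_one _ _)

variable (Bs Ls Rs) in
/-- The positions `e` such that the window `T_ℓ[a..e+1)` to the right of the anchor `a` has at most
`|X̄_ℓ| + ℓ` symbols and at most `2ℓ + 3` blocks. -/
def rightReach (T X : List α) (l a : ℕ) : Set ℕ :=
  {e | a ≤ e ∧ e < (Tseq Bs Ls Rs T l).length ∧ e - a + 1 ≤ (Xbar Bs Ls Rs X l).length + l ∧
    (shrinkK Bs Ls Rs (l + 1) (((Tseq Bs Ls Rs T l).drop a).take (e + 1 - a))).length ≤ 2 * l + 3}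

variable (Bs Ls Rs) in
/-- The positions `b` such that the window `T_ℓ[b..a+1)` to the left of the anchor `a` has at most
`|X̄_ℓ| + ℓ` symbols and at most `2ℓ + 3` blocks. -/
def leftReach (T X : List α) (l a : ℕ) : Set ℕ :=
  {b | b ≤ a ∧ a - b + 1 ≤ (Xbar Bs Ls Rs X l).length + l ∧
    (shrinkK Bs Ls Rs (l + 1) (((Tseq Bs Ls Rs T l).drop b).take (a + 1 - b))).length ≤ 2 * l + 3}

variable {T X : List α} {P S : List (UA α)} {a b e i j l : ℕ}

theorem length_splitBy_Xbar_le_of_isGreatest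
    (hl : IsGreatest {k | k < (Xbar Bs Ls Rs X k).length} l) :
    ((Xbar Bs Ls Rs X l).splitBy (glueK Bs Ls Rs (l + 1))).length ≤ l + 3 := by
  have hle := length_splitBy_Xbar_le (Bs := Bs) (Ls := Ls) (Rs := Rs) X l
  have hmax : (Xbar Bs Ls Rs X (l + 1)).length ≤ l + 1 :=
    not_lt.1 fun h ↦ (hl.2 h).not_gt l.lt_succ_self
  omega

theorem length_append_Xbar_le_of_isGreatest_rightReach
    (hl : IsGreatest {k | k < (Xbar Bs Ls Rs X k).length} l)
    (hT : Tseq Bs Ls Rs T l = P ++ Xbar Bs Ls Rs X l ++ S)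
    (hcov : NearlyCovers P (Xbar Bs Ls Rs X l) S l i j)
    (ha : i < (expandStr ((Tseq Bs Ls Rs T l).take (a + 1))).length)
    (he : IsGreatest (rightReach Bs Ls Rs T X l a) e) :
    (P ++ Xbar Bs Ls Rs X l).length ≤ e + 1 := by
  by_contra! hlt
  rw [hT] at ha
  have hP : P.length ≤ a + l := hcov.length_left_le_add ha
  set n := (P ++ Xbar Bs Ls Rs X l).length with hn
  have hae : a ≤ e := he.1.1
  have hmem : n - 1 ∈ rightReach Bs Ls Rs T X l a := by
    refine ⟨by omega, by rw [hT, List.length_append]; omega,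
      by rw [List.length_append] at hn; omega, ?_⟩
    rw [hT, shrinkK, length_shrinkWith, show n - 1 + 1 - a = n - a by omega, ← List.drop_take,
      List.take_left' hn.symm]
    grw [length_splitBy_drop_append_le hP, length_splitBy_Xbar_le_of_isGreatest hl]
    omega
  have hle : n - 1 ≤ e := he.2 hmem
  omega

theorem le_length_of_isLeast_leftReach
    (hl : IsGreatest {k | k < (Xbar Bs Ls Rs X k).length} l)
    (hT : Tseq Bs Ls Rs T l = P ++ Xbar Bs Ls Rs X l ++ S)
    (hcov : NearlyCovers P (Xbar Bs Ls Rs X l) S l i j)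
    (ha : (expandStr ((Tseq Bs Ls Rs T l).take a)).length < j)
    (hb : IsLeast (leftReach Bs Ls Rs T X l a) b) :
    b ≤ P.length := by
  by_contra! hlt
  rw [hT] at ha
  have hZ : a < P.length + (Xbar Bs Ls Rs X l).length + l := by
    simpa using hcov.lt_length_append_add ha
  have hba : b ≤ a := hb.1.1
  have hmem : P.length ∈ leftReach Bs Ls Rs T X l a := by
    refine ⟨by omega, by omega, ?_⟩
    rw [hT, shrinkK, length_shrinkWith, List.append_assoc, List.drop_left' rfl]
    grw [length_splitBy_take_append_le (k := l) (by omega),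
      length_splitBy_Xbar_le_of_isGreatest hl]
    omega
  exact (hb.2 hmem).not_gt hlt

/-- The anchor `a` generalizes `m_ℓ`: `hai` and `hia` say that the expansion of `T_ℓ[a]` meets the
occurrence `T[i..i+|X|)`. -/
theorem occurrences_in_proxy_text_general
    (hdisj : ∀ k, k % 2 = 0 → Disjoint (Ls k) (Rs k))
    {y y' b' e' il : ℕ} (hl : IsGreatest {k | k < (Xbar Bs Ls Rs X k).length} l)
    (hai : (expandStr ((Tseq Bs Ls Rs T l).take a)).length < i + X.length)
    (hia : i < (expandStr ((Tseq Bs Ls Rs T l).take (a + 1))).length)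
    (he : IsGreatest (rightReach Bs Ls Rs T X l a) e)
    (hb : IsLeast (leftReach Bs Ls Rs T X l a) b)
    (hb' : IsLeast {p | b ≤ p ∧ p ≤ e + 1 ∧
      y ≤ (expandStr ((Tseq Bs Ls Rs T l).take p)).length} b')
    (he' : IsGreatest {q | q ≤ e ∧
      (expandStr ((Tseq Bs Ls Rs T l).take (q + 1))).length ≤ y'} e')
    (hiy : y ≤ i) (hiy' : i + X.length ≤ y') (hocc : (T.drop i).take X.length = X)
    (hil1 : il ≤ (Tseq Bs Ls Rs T l).length)
    (hil2 : (expandStr ((Tseq Bs Ls Rs T l).take il)).length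
      = i + (expandStr (((List.range l).map (Lblk Bs Ls Rs X)).flatten)).length) :
    b' ≤ il ∧ il + (Xbar Bs Ls Rs X l).length ≤ e' + 1 := by
  have hpos : 0 < (Xbar Bs Ls Rs X l).length := Nat.zero_lt_of_lt hl.1
  obtain ⟨P, S, hT, hP, hcov⟩ :=
    exists_Tseq_eq_append_Xbar_append hdisj hocc (List.ne_nil_of_length_pos hpos)
  have hend := length_append_Xbar_le_of_isGreatest_rightReach hl hT hcov hia he
  have hstart := le_length_of_isLeast_leftReach hl hT hcov hai hb
  have htakeP : (Tseq Bs Ls Rs T l).take P.length = P := by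
    rw [hT, List.append_assoc, List.take_left' rfl]
  have htakePX : (Tseq Bs Ls Rs T l).take (P ++ Xbar Bs Ls Rs X l).length
      = P ++ Xbar Bs Ls Rs X l := by
    rw [hT, List.take_left' rfl]
  obtain rfl : il = P.length := by
    refine (length_expandStr_take_strictMonoOn (Tseq Bs Ls Rs T l)).injOn hil1 ?_ ?_
    · rw [Set.mem_Iic, hT, List.append_assoc, List.length_append]
      exact Nat.le_add_right _ _
    · simp only [htakeP, hP, hil2]
  rw [List.length_append] at hend htakePX
  refine ⟨hb'.2 ⟨hstart, by omega, ?_⟩, ?_⟩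
  · rw [htakeP]
    exact hiy.trans hcov.le_start
  · have hq : P.length + (Xbar Bs Ls Rs X l).length - 1 ≤ e' := by
      refine he'.2 ⟨by omega, ?_⟩
      rw [Nat.sub_add_cancel (by omega), htakePX]
      exact hcov.stop_le.trans hiy'
    omega

end Occurrences

/-- With the proxy text `Y'_ℓ = T_ℓ[b'..e'+1)` defined as in the
proxy-text construction, every occurrence of `X` contained in `Y` induces an
occurrence of `X̄_ℓ` (at the position `i_ℓ` stipulated by the occurrence-transfer
lemma) that is contained within the proxy text: `b' ≤ i_ℓ` and `i_ℓ + |X̄_ℓ| ≤ e'+1`. -/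
theorem occurrences_in_proxy_text
    (Bs Ls Rs : ℕ → Set (UA α))
    [∀ k, DecidablePred (· ∈ Bs k)] [∀ k, DecidablePred (· ∈ Ls k)]
    [∀ k, DecidablePred (· ∈ Rs k)]
    (hdisj : ∀ k, k % 2 = 0 → Disjoint (Ls k) (Rs k))
    (T X Y : List α) (x x' y y' : ℕ)
    -- `X = T[x..x')` and `Y = T[y..y')` are fragments of `T`
    (hx : x ≤ x') (hx' : x' ≤ T.length) (hX : X = (T.drop x).take (x' - x))
    (hy : y ≤ y') (hy' : y' ≤ T.length) (hY : Y = (T.drop y).take (y' - y))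
    (hXlen : 1 ≤ X.length) (hYlen : Y.length < 2 * X.length)
    -- `ℓ = max{k ≥ 0 : |X̄_k| > k}`
    (l : ℕ) (hl : IsGreatest {k : ℕ | k < (Xbar Bs Ls Rs X k).length} l)
    -- `m = y + ⌊|Y|/2⌋`, a middle position of `Y`
    (m : ℕ) (hm : m = y + Y.length / 2)
    -- `m_ℓ` is the position of the ancestor of `T[m]` in `T_ℓ`
    (ml : ℕ) (hml1 : ml < (Tseq Bs Ls Rs T l).length)
    (hml2 : (expandStr ((Tseq Bs Ls Rs T l).take ml)).length ≤ m)
    (hml3 : m < (expandStr ((Tseq Bs Ls Rs T l).take (ml + 1))).length)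
    -- `e ∈ [m_ℓ..|T_ℓ|)` is the largest position such that `e − m_ℓ + 1 ≤ |X̄_ℓ| + ℓ`
    -- and `|shrink_{ℓ+1}(T_ℓ[m_ℓ..e+1))| ≤ 2ℓ+3`
    (e : ℕ) (he1 : ml ≤ e) (he2 : e < (Tseq Bs Ls Rs T l).length)
    (he3 : e - ml + 1 ≤ (Xbar Bs Ls Rs X l).length + l)
    (he4 : (shrinkK Bs Ls Rs (l + 1)
        (((Tseq Bs Ls Rs T l).drop ml).take (e + 1 - ml))).length ≤ 2 * l + 3)
    (he5 : ∀ e2, e < e2 → e2 < (Tseq Bs Ls Rs T l).length →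
      ¬(e2 - ml + 1 ≤ (Xbar Bs Ls Rs X l).length + l ∧
        (shrinkK Bs Ls Rs (l + 1)
          (((Tseq Bs Ls Rs T l).drop ml).take (e2 + 1 - ml))).length ≤ 2 * l + 3))
    -- `b ∈ [0..m_ℓ]` is the smallest position such that `m_ℓ − b + 1 ≤ |X̄_ℓ| + ℓ`
    -- and `|shrink_{ℓ+1}(T_ℓ[b..m_ℓ+1))| ≤ 2ℓ+3`
    (b : ℕ) (hb1 : b ≤ ml)
    (hb2 : ml - b + 1 ≤ (Xbar Bs Ls Rs X l).length + l)
    (hb3 : (shrinkK Bs Ls Rs (l + 1)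
        (((Tseq Bs Ls Rs T l).drop b).take (ml + 1 - b))).length ≤ 2 * l + 3)
    (hb4 : ∀ b2 < b,
      ¬(ml - b2 + 1 ≤ (Xbar Bs Ls Rs X l).length + l ∧
        (shrinkK Bs Ls Rs (l + 1)
          (((Tseq Bs Ls Rs T l).drop b2).take (ml + 1 - b2))).length ≤ 2 * l + 3))
    -- `b' ∈ [b..e+1]` is minimal with `y ≤ |exp(T_ℓ[0..b'))|`
    (b' : ℕ) (hb'1 : b ≤ b') (hb'2 : b' ≤ e + 1)
    (hb'3 : y ≤ (expandStr ((Tseq Bs Ls Rs T l).take b')).length)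
    (hb'4 : ∀ b2, b ≤ b2 → b2 ≤ e + 1 →
      y ≤ (expandStr ((Tseq Bs Ls Rs T l).take b2)).length → b' ≤ b2)
    -- `e' ≤ e` is maximal with `|exp(T_ℓ[0..e'+1))| ≤ y'`
    (e' : ℕ) (he'1 : e' ≤ e)
    (he'2 : (expandStr ((Tseq Bs Ls Rs T l).take (e' + 1))).length ≤ y')
    (he'3 : ∀ e2, e2 ≤ e →
      (expandStr ((Tseq Bs Ls Rs T l).take (e2 + 1))).length ≤ y' → e2 ≤ e')
    -- an occurrence of `X` at position `i`, contained in `Y`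
    (i : ℕ) (hiy : y ≤ i) (hiy' : i + X.length ≤ y')
    (hocc : (T.drop i).take X.length = X)
    -- `i_ℓ` is the position with `|exp(T_ℓ[0..i_ℓ))| = i + |exp(L_0 ⋯ L_{ℓ−1})|`
    (il : ℕ) (hil1 : il ≤ (Tseq Bs Ls Rs T l).length)
    (hil2 : (expandStr ((Tseq Bs Ls Rs T l).take il)).length
      = i + (expandStr (((List.range l).map (Lblk Bs Ls Rs X)).flatten)).length) :
    b' ≤ il ∧ il + (Xbar Bs Ls Rs X l).length ≤ e' + 1 := by
  have hYl : Y.length = y' - y := by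
    rw [hY, List.length_take, List.length_drop]
    omega
  exact occurrences_in_proxy_text_general hdisj hl (by omega) (by omega)
    ⟨⟨he1, he2, he3, he4⟩, fun q hq ↦ not_lt.1 fun h ↦ he5 q h hq.2.1 hq.2.2⟩
    ⟨⟨hb1, hb2, hb3⟩, fun p hp ↦ not_lt.1 fun h ↦ hb4 p h hp.2⟩
    ⟨⟨hb'1, hb'2, hb'3⟩, fun p hp ↦ hb'4 p hp.1 hp.2.1 hp.2.2⟩
    ⟨⟨he'1, he'2⟩, fun q hq ↦ he'3 q hq.1 hq.2⟩ hiy hiy' hocc hil1 hil2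

end IPM
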